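/- Let K be a compact subset of a real Banach space X, γ ∈ (0,1], and δ ≥ 1 a constant such that every n-dimensional subspace Y of X admits a linear isomorphism T : Y → ℓ_2^n with ‖T‖·‖T^{−1}‖ ≤ δ. Then every sequence produced by the weak greedy algorithm with parameter γ satisfies σ_n(K) ≤ γ^{−1} δ (n! V_n)^{1/n} ε_n(co(K)). -/

import Mathlib

open scoped RealInnerProductSpace

/-- Dyadic entropy number: infimum of all `ε > 0` such that `K` is covered by `2^n`
balls of radius `ε`. -/
noncomputable def entropyNumber {X : Type*} [NormedAddCommGroup X] (n : ℕ) (K : Set X) : ℝ :=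
  sInf {ε : ℝ | 0 < ε ∧ ∃ c : Fin (2 ^ n) → X, K ⊆ ⋃ i, Metric.closedBall (c i) ε}

/-- Symmetric (absolutely) convex hull: closure of the set of finite sums `∑ cᵢ gᵢ`
with `gᵢ ∈ K` and `∑ |cᵢ| ≤ 1`. -/
noncomputable def symConvexHull {X : Type*} [NormedAddCommGroup X] [NormedSpace ℝ X]
    (K : Set X) : Set X :=
  closure {x : X | ∃ (m : ℕ) (c : Fin m → ℝ) (g : Fin m → X),
    (∀ i, g i ∈ K) ∧ (∑ i, |c i|) ≤ 1 ∧ x = ∑ i, c i • g i}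

/-- Volume of the unit Euclidean ball in `ℝⁿ`. -/
noncomputable def unitBallVol (n : ℕ) : ℝ :=
  Real.pi ^ ((n : ℝ) / 2) / Real.Gamma ((n : ℝ) / 2 + 1)

/-- Span of the first `n` terms of a sequence. -/
noncomputable def spanFirst {X : Type*} [NormedAddCommGroup X] [NormedSpace ℝ X]
    (f : ℕ → X) (n : ℕ) : Submodule ℝ X :=
  Submodule.span ℝ (f '' {i | i < n})

/-- The weak greedy algorithm with parameter `γ`: `f n` (the `(n+1)`-st iterate) lies in `K`
and its distance to the span of the previous iterates is at least `γ` times that of any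
other element of `K`. -/
def IsWeakGreedy {X : Type*} [NormedAddCommGroup X] [NormedSpace ℝ X]
    (γ : ℝ) (K : Set X) (f : ℕ → X) : Prop :=
  ∀ n : ℕ, f n ∈ K ∧ ∀ g ∈ K,
    γ * Metric.infDist g (spanFirst f n : Set X) ≤ Metric.infDist (f n) (spanFirst f n : Set X)

/-- The greedy error `σ_n(K) = sup_{f ∈ K} dist(f, span{f_1,…,f_n})`. -/
noncomputable def greedyError {X : Type*} [NormedAddCommGroup X] [NormedSpace ℝ X]
    (K : Set X) (f : ℕ → X) (n : ℕ) : ℝ :=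
  sSup ((fun g => Metric.infDist g (spanFirst f n : Set X)) '' K)

/-- Kolmogorov `n`-width. -/
noncomputable def kolmogorovWidth {X : Type*} [NormedAddCommGroup X] [NormedSpace ℝ X]
    (n : ℕ) (K : Set X) : ℝ :=
  sInf {d : ℝ | ∃ Y : Submodule ℝ X, FiniteDimensional ℝ Y ∧ Module.finrank ℝ Y ≤ n ∧
    d = sSup ((fun g => Metric.infDist g (Y : Set X)) '' K)}

/-- `f` admits an `ℓ¹` representation over the dictionary `D`. -/
def HasL1Rep {X : Type*} [NormedAddCommGroup X] [NormedSpace ℝ X] (D : Set X) (f : X) : Prop :=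
  ∃ (c : ℕ → ℝ) (g : ℕ → X), (∀ i, g i ∈ D) ∧ Summable (fun i => |c i|) ∧
    HasSum (fun i => c i • g i) f

/-- The variation norm `‖f‖_{L₁(D)}`. -/
noncomputable def varNorm {X : Type*} [NormedAddCommGroup X] [NormedSpace ℝ X]
    (D : Set X) (f : X) : ℝ :=
  sInf {t : ℝ | ∃ (c : ℕ → ℝ) (g : ℕ → X), (∀ i, g i ∈ D) ∧ Summable (fun i => |c i|) ∧
    HasSum (fun i => c i • g i) f ∧ t = ∑' i, |c i|}

/-- The orthogonal greedy algorithm with target `f`: `fa 0 = 0`; at each step `g n ∈ D`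
maximizes `|⟨g, f - fa n⟩|` over `D`, and `fa (n+1)` is the orthogonal projection of `f`
onto `span{g 0, …, g n}`. -/
def IsOGA {X : Type*} [NormedAddCommGroup X] [InnerProductSpace ℝ X]
    (D : Set X) (f : X) (g fa : ℕ → X) : Prop :=
  fa 0 = 0 ∧ ∀ n : ℕ,
    g n ∈ D ∧ (∀ h ∈ D, |⟪h, f - fa n⟫| ≤ |⟪g n, f - fa n⟫|) ∧
    fa (n + 1) ∈ Submodule.span ℝ (g '' {i | i ≤ n}) ∧
    ∀ w ∈ Submodule.span ℝ (g '' {i | i ≤ n}), ⟪f - fa (n + 1), w⟫ = 0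

/-- Best `n`-term approximation error `E_n(f, D)`. -/
noncomputable def bestNTermError {X : Type*} [NormedAddCommGroup X] [NormedSpace ℝ X]
    (D : Set X) (n : ℕ) (f : X) : ℝ :=
  sInf {r : ℝ | ∃ (c : Fin n → ℝ) (g : Fin n → X), (∀ i, g i ∈ D) ∧ r = ‖f - ∑ i, c i • g i‖}

/-- The K-functional `K(t, g)` between `X` and `L₁(D)`. -/
noncomputable def Kfunctional {X : Type*} [NormedAddCommGroup X] [NormedSpace ℝ X]
    (D : Set X) (t : ℝ) (gg : X) : ℝ :=
  sInf {s : ℝ | ∃ h : X, HasL1Rep D h ∧ s = ‖gg - h‖ + t * varNorm D h}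

/-- The interpolation norm `‖g‖_θ = sup_{t > 0} t^{-θ} K(t, g)`. -/
noncomputable def interpNorm {X : Type*} [NormedAddCommGroup X] [NormedSpace ℝ X]
    (D : Set X) (θ : ℝ) (gg : X) : ℝ :=
  sSup ((fun t => t ^ (-θ) * Kfunctional D t gg) '' Set.Ioi (0 : ℝ))

/-!
If `σ = σ_n(K) > 0`, each of the `n` greedy vectors `f_k` lies at distance at least `γσ` from the
span of its predecessors. Let `T` map their span isomorphically onto Euclidean space. By
Gram–Schmidt, `T` sends the cross-polytope `{∑ c_k f_k : ∑ |c_k| ≤ 1} ⊆ co(K)` to a set of volume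
at least `(γσ / ‖T⁻¹‖)^n 2^n / n!`. If `2^n` balls of radius `ε` cover `co(K)`, this image is also
covered by `2^n` sets of diameter at most `2‖T‖ε`, each of volume at most `(‖T‖ε)^n V_n`. Comparing
the two bounds gives `γσ ≤ ‖T‖ ‖T⁻¹‖ (n! V_n)^{1/n} ε`. The centres of the covering balls need not
lie in the span, so the pieces are only known to have small diameter; their volume is controlled by
the isodiametric inequality, which follows from Steiner symmetrization, and no factor `2` is lost.
-/

open MeasureTheory Metric Set

section Steiner

variable {ι : Type*} [DecidableEq ι] {A : Set (ι → ℝ)} {i j : ι}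

/-- The Steiner symmetrization of `A` in the `i`-th coordinate direction: the section of `A` by each
line in this direction is replaced by the open interval of the same length centred at the hyperplane
`x i = 0`. In particular, null sections are discarded. -/
def steinerSymm (i : ι) (A : Set (ι → ℝ)) : Set (ι → ℝ) :=
  {x | ENNReal.ofReal (2 * |x i|) < volume {s : ℝ | Function.update x i s ∈ A}}

/-- Invariance of `A` under the reflection in the hyperplane `x i = 0`. -/
def IsReflSymm (i : ι) (A : Set (ι → ℝ)) : Prop :=
  ∀ ⦃x⦄, x ∈ A → Function.update x i (-x i) ∈ A

theorem isReflSymm_steinerSymm : IsReflSymm i (steinerSymm i A) := fun x hx => by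
  simpa [steinerSymm] using hx

theorem IsReflSymm.steinerSymm (hA : IsReflSymm j A) (hij : j ≠ i) :
    IsReflSymm j (steinerSymm i A) := by
  intro x hx
  simp only [_root_.steinerSymm, mem_ofPred_eq, Function.update_of_ne hij.symm] at hx ⊢
  refine hx.trans_le (measure_mono fun s hs => ?_)
  have hs' := hA hs
  rwa [Function.update_of_ne hij, Function.update_comm hij.symm] at hs'

theorem neg_mem_of_forall_isReflSymm [Finite ι] (hA : ∀ i, IsReflSymm i A) {x : ι → ℝ}
    (hx : x ∈ A) : -x ∈ A := by
  have := Fintype.ofFinite ι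
  have hmem (s : Finset ι) : s.piecewise (-x) x ∈ A := by
    induction s using Finset.induction_on with
    | empty => simpa using hx
    | insert i s hi ih =>
      have hrefl := hA i ih
      rwa [Finset.piecewise_eq_of_notMem _ _ _ hi, ← Pi.neg_apply,
        ← Finset.piecewise_insert] at hrefl
  simpa using hmem Finset.univ

theorem lmarginal_singleton_indicator_one (hA : MeasurableSet A) (i : ι) (x : ι → ℝ) :
    (∫⋯∫⁻_{i}, A.indicator 1 ∂fun _ => (volume : Measure ℝ)) x =
      volume {s : ℝ | Function.update x i s ∈ A} := by
  rw [lmarginal_singleton]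
  exact lintegral_indicator_one (measurable_update x hA)

theorem measurableSet_steinerSymm (hA : MeasurableSet A) (i : ι) :
    MeasurableSet (steinerSymm i A) := by
  have hmeas : Measurable fun x : ι → ℝ => volume {s : ℝ | Function.update x i s ∈ A} := by
    simp_rw [← lmarginal_singleton_indicator_one hA]
    exact (measurable_one.indicator hA).lmarginal _
  exact measurableSet_lt (by fun_prop) hmeas

theorem volume_setOf_ofReal_two_mul_abs_lt (L : ENNReal) :
    volume {s : ℝ | ENNReal.ofReal (2 * |s|) < L} = L := by
  induction L with
  | top => simp [ENNReal.mul_lt_top]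
  | coe l =>
    have hIoo : {s : ℝ | ENNReal.ofReal (2 * |s|) < l} = Ioo (-(l / 2 : ℝ)) (l / 2) := by
      ext s
      rw [mem_ofPred_eq, ENNReal.ofReal_lt_coe_iff (by positivity), mem_Ioo, ← abs_lt]
      constructor <;> intro h <;> linarith
    rw [hIoo, Real.volume_Ioo, sub_neg_eq_add, add_halves, ENNReal.ofReal_coe_nnreal]

theorem volume_steinerSymm [Fintype ι] (hA : MeasurableSet A) (i : ι) :
    volume (steinerSymm i A) = volume A := by
  have hS := measurableSet_steinerSymm hA i
  rw [← lintegral_indicator_one hA, ← lintegral_indicator_one hS]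
  refine lintegral_eq_of_lmarginal_eq {i} (measurable_one.indicator hS)
    (measurable_one.indicator hA) (funext fun x => ?_)
  rw [lmarginal_singleton_indicator_one hA, lmarginal_singleton_indicator_one hS]
  simp only [steinerSymm, mem_ofPred_eq, Function.update_self, Function.update_idem]
  exact volume_setOf_ofReal_two_mul_abs_lt _

theorem volume_add_volume_le_of_forall_dist_le {S T : Set ℝ} {r : ℝ} (hS : S.Nonempty)
    (hT : T.Nonempty) (h : ∀ a ∈ S, ∀ b ∈ T, dist a b ≤ r) :
    volume S + volume T ≤ ENNReal.ofReal (2 * r) := by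
  have hsum : ∀ a ∈ S, ∀ a' ∈ S, ∀ b ∈ T, ∀ b' ∈ T, dist a a' + dist b b' ≤ 2 * r := by
    intro a ha a' ha' b hb b' hb'
    have h₁ := abs_le.1 (h a ha b hb)
    have h₂ := abs_le.1 (h a ha b' hb')
    have h₃ := abs_le.1 (h a' ha' b hb)
    have h₄ := abs_le.1 (h a' ha' b' hb')
    rw [Real.dist_eq, Real.dist_eq]
    rcases abs_cases (a - a') with ⟨ha, -⟩ | ⟨ha, -⟩ <;>
      rcases abs_cases (b - b') with ⟨hb, -⟩ | ⟨hb, -⟩ <;> linarith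
  have hdiamS : ∀ b ∈ T, ∀ b' ∈ T, dist b b' ≤ 2 * r - diam S := fun b hb b' hb' =>
    le_sub_comm.1 <| diam_le_of_forall_dist_le_of_nonempty hS fun a ha a' ha' =>
      le_sub_iff_add_le.2 (hsum a ha a' ha' b hb b' hb')
  have hbddS : Bornology.IsBounded S := by
    obtain ⟨b, hb⟩ := hT
    exact isBounded_iff.2 ⟨2 * r, fun a ha a' ha' => by simpa using hsum a ha a' ha' b hb b hb⟩
  have hbddT : Bornology.IsBounded T := isBounded_iff.2 ⟨_, hdiamS⟩
  calc volume S + volume T ≤ ediam S + ediam T :=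
        add_le_add (Real.volume_le_diam S) (Real.volume_le_diam T)
    _ = ENNReal.ofReal (diam S + diam T) := by
      rw [ENNReal.ofReal_add diam_nonneg diam_nonneg, diam, diam,
        ENNReal.ofReal_toReal hbddS.ediam_ne_top, ENNReal.ofReal_toReal hbddT.ediam_ne_top]
    _ ≤ ENNReal.ofReal (2 * r) := ENNReal.ofReal_le_ofReal <|
      le_sub_iff_add_le'.1 (diam_le_of_forall_dist_le_of_nonempty hT hdiamS)

variable [Fintype ι] {D : ℝ}

theorem sum_sq_update_sub_update (x y : ι → ℝ) (i : ι) (a b : ℝ) :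
    ∑ j, (Function.update x i a j - Function.update y i b j) ^ 2 =
      (a - b) ^ 2 + ∑ j ∈ Finset.univ.erase i, (x j - y j) ^ 2 := by
  rw [← Finset.add_sum_erase _ _ (Finset.mem_univ i), Function.update_self, Function.update_self]
  congr 1
  refine Finset.sum_congr rfl fun j hj => ?_
  rw [Function.update_of_ne (Finset.ne_of_mem_erase hj),
    Function.update_of_ne (Finset.ne_of_mem_erase hj)]

theorem sum_sq_sub_le_of_mem_steinerSymm (hA : ∀ x ∈ A, ∀ y ∈ A, ∑ j, (x j - y j) ^ 2 ≤ D) :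
    ∀ x ∈ steinerSymm i A, ∀ y ∈ steinerSymm i A, ∑ j, (x j - y j) ^ 2 ≤ D := by
  intro x hx y hy
  set R := ∑ j ∈ Finset.univ.erase i, (x j - y j) ^ 2 with hR
  have hsection (z) (hz : z ∈ steinerSymm i A) : {s : ℝ | Function.update z i s ∈ A}.Nonempty :=
    nonempty_of_measure_ne_zero (bot_lt_iff_ne_bot.1 (bot_le.trans_lt hz))
  have hdist : ∀ a ∈ {s : ℝ | Function.update x i s ∈ A},
      ∀ b ∈ {s : ℝ | Function.update y i s ∈ A}, dist a b ≤ √(D - R) := by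
    refine fun a ha b hb => Real.abs_le_sqrt ?_
    rw [le_sub_iff_add_le, hR, ← sum_sq_update_sub_update]
    exact hA _ ha _ hb
  have hlt : 2 * |x i| + 2 * |y i| < 2 * √(D - R) := by
    have h := (ENNReal.add_lt_add hx hy).trans_le
      (volume_add_volume_le_of_forall_dist_le (hsection x hx) (hsection y hy) hdist)
    rwa [← ENNReal.ofReal_add (by positivity) (by positivity),
      ENNReal.ofReal_lt_ofReal_iff_of_nonneg (by positivity)] at h
  have hcoord : |x i - y i| < √(D - R) := by linarith [abs_sub (x i) (y i)]
  calc ∑ j, (x j - y j) ^ 2 = (x i - y i) ^ 2 + R :=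
        (Finset.add_sum_erase _ _ (Finset.mem_univ i)).symm
    _ ≤ D := by
      have := (Real.lt_sqrt (abs_nonneg _)).1 hcoord
      rw [sq_abs] at this
      linarith

theorem exists_isReflSymm_volume_eq (hA : MeasurableSet A)
    (hD : ∀ x ∈ A, ∀ y ∈ A, ∑ j, (x j - y j) ^ 2 ≤ D) (s : Finset ι) :
    ∃ B : Set (ι → ℝ), MeasurableSet B ∧ volume B = volume A ∧
      (∀ x ∈ B, ∀ y ∈ B, ∑ j, (x j - y j) ^ 2 ≤ D) ∧ ∀ j ∈ s, IsReflSymm j B := by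
  induction s using Finset.induction_on with
  | empty => exact ⟨A, hA, rfl, hD, by simp⟩
  | insert i s hi ih =>
    obtain ⟨B, hB, hvol, hDB, hsymm⟩ := ih
    refine ⟨steinerSymm i B, measurableSet_steinerSymm hB i,
      (volume_steinerSymm hB i).trans hvol, sum_sq_sub_le_of_mem_steinerSymm hDB, ?_⟩
    intro j hj
    rcases Finset.mem_insert.1 hj with rfl | hjs
    · exact isReflSymm_steinerSymm
    · exact (hsymm j hjs).steinerSymm (ne_of_mem_of_not_mem hjs hi)

end Steiner

section Isodiametric

theorem volume_le_volume_setOf_sum_sq_le {ι : Type*} [Fintype ι] {A : Set (ι → ℝ)}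
    (hA : MeasurableSet A) {r : ℝ}
    (h : ∀ x ∈ A, ∀ y ∈ A, ∑ j, (x j - y j) ^ 2 ≤ (2 * r) ^ 2) :
    volume A ≤ volume {x : ι → ℝ | ∑ j, x j ^ 2 ≤ r ^ 2} := by
  classical
  obtain ⟨B, -, hvol, hdiam, hsymm⟩ := exists_isReflSymm_volume_eq hA h Finset.univ
  rw [← hvol]
  refine measure_mono fun x hx => ?_
  have hneg : -x ∈ B := neg_mem_of_forall_isReflSymm (fun j => hsymm j (Finset.mem_univ j)) hx
  have h4 : 4 * ∑ j, x j ^ 2 ≤ 4 * r ^ 2 := by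
    calc 4 * ∑ j, x j ^ 2 = ∑ j, (x j - (-x) j) ^ 2 := by
          rw [Finset.mul_sum]
          exact Finset.sum_congr rfl fun j _ => by rw [Pi.neg_apply]; ring
      _ ≤ (2 * r) ^ 2 := hdiam x hx _ hneg
      _ = 4 * r ^ 2 := by ring
  exact le_of_mul_le_mul_left h4 four_pos

variable {E : Type*} [NormedAddCommGroup E] [InnerProductSpace ℝ E] [FiniteDimensional ℝ E]
  [MeasurableSpace E] [BorelSpace E]

theorem measurePreserving_repr_symm_toLp {ι : Type*} [Fintype ι] (e : OrthonormalBasis ι ℝ E) :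
    MeasurePreserving fun x : ι → ℝ => e.repr.symm (WithLp.toLp 2 x) :=
  e.measurePreserving_repr_symm.comp (PiLp.volume_preserving_toLp ι)

theorem volume_le_volume_closedBall_of_forall_dist_le {A : Set E} {r : ℝ}
    (h : ∀ x ∈ A, ∀ y ∈ A, dist x y ≤ 2 * r) : volume A ≤ volume (closedBall (0 : E) r) := by
  rcases A.eq_empty_or_nonempty with rfl | hne
  · simp
  have hdiam : diam (closure A) ≤ 2 * r :=
    (diam_closure A).trans_le (diam_le_of_forall_dist_le_of_nonempty hne h)
  have hr : 0 ≤ r := by linarith [diam_nonneg (s := closure A)]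
  have hbdd : Bornology.IsBounded (closure A) := (isBounded_iff.2 ⟨2 * r, h⟩).closure
  set e := stdOrthonormalBasis ℝ E
  have hpres := measurePreserving_repr_symm_toLp e
  have hdist (x y : Fin (Module.finrank ℝ E) → ℝ) :
      dist (e.repr.symm (WithLp.toLp 2 x)) (e.repr.symm (WithLp.toLp 2 y)) =
        √(∑ j, (x j - y j) ^ 2) := by
    simp [EuclideanSpace.dist_eq, Real.dist_eq]
  calc volume A ≤ volume (closure A) := measure_mono subset_closure
    _ = volume ((fun x => e.repr.symm (WithLp.toLp 2 x)) ⁻¹' closure A) :=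
      (hpres.measure_preimage isClosed_closure.nullMeasurableSet).symm
    _ ≤ volume {x : Fin (Module.finrank ℝ E) → ℝ | ∑ j, x j ^ 2 ≤ r ^ 2} :=
      volume_le_volume_setOf_sum_sq_le (hpres.measurable isClosed_closure.measurableSet)
        fun x hx y hy => by
          rw [← Real.sqrt_le_left (by positivity), ← hdist]
          exact (dist_le_diam_of_mem hbdd hx hy).trans hdiam
    _ = volume ((fun x => e.repr.symm (WithLp.toLp 2 x)) ⁻¹' closedBall 0 r) := by
      congr 1
      ext x
      simp [EuclideanSpace.norm_eq, Real.sqrt_le_left hr]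
    _ = volume (closedBall (0 : E) r) :=
      hpres.measure_preimage isClosed_closedBall.nullMeasurableSet

end Isodiametric

section CrossPolytope

/-- The cross-polytope spanned by a family `v`: the absolutely convex hull of the `v i`, presented
as the image of the unit ball of `ℓ¹` under `c ↦ ∑ i, c i • v i`. -/
def crossPolytope {ι E : Type*} [Fintype ι] [AddCommGroup E] [Module ℝ E] (v : ι → E) : Set E :=
  Fintype.linearCombination ℝ v '' {c | ∑ i, |c i| ≤ 1}

theorem image_crossPolytope {ι E F : Type*} [Fintype ι] [AddCommGroup E] [Module ℝ E]
    [AddCommGroup F] [Module ℝ F] (L : E →ₗ[ℝ] F) (v : ι → E) :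
    L '' crossPolytope v = crossPolytope (L ∘ v) := by
  rw [crossPolytope, crossPolytope, image_image]
  exact image_congr fun c _ => by simp [Fintype.linearCombination_apply]

section GramSchmidt

open InnerProductSpace

variable {𝕜 ι E : Type*} [RCLike 𝕜] [NormedAddCommGroup E] [InnerProductSpace 𝕜 E]
  [LinearOrder ι] [LocallyFiniteOrderBot ι] [WellFoundedLT ι]

theorem sub_gramSchmidt_mem_span (v : ι → E) (i : ι) :
    v i - gramSchmidt 𝕜 v i ∈ Submodule.span 𝕜 (v '' Iio i) := by
  rw [← span_gramSchmidt_Iio 𝕜 v i, gramSchmidt_def, sub_sub_cancel]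
  refine Submodule.sum_mem _ fun j hj => ?_
  have hle : Submodule.span 𝕜 {gramSchmidt 𝕜 v j} ≤
      Submodule.span 𝕜 (gramSchmidt 𝕜 v '' Iio i) :=
    Submodule.span_mono (singleton_subset_iff.2 (mem_image_of_mem _ (Finset.mem_Iio.1 hj)))
  exact hle (Submodule.starProjection_apply_mem _ _)

variable [Fintype ι] [FiniteDimensional 𝕜 E] (hE : Module.finrank 𝕜 E = Fintype.card ι)
  (v : ι → E) (i : ι)

theorem inner_gramSchmidtOrthonormalBasis_eq_zero_of_mem_span {w : E}
    (hw : w ∈ Submodule.span 𝕜 (v '' Iio i)) :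
    inner 𝕜 (gramSchmidtOrthonormalBasis hE v i) w = 0 := by
  rw [← Submodule.mem_orthogonal_singleton_iff_inner_right]
  refine Submodule.span_le.2 ?_ hw
  rintro _ ⟨j, hj, rfl⟩
  exact Submodule.mem_orthogonal_singleton_iff_inner_right.2
    (gramSchmidtOrthonormalBasis_inv_triangular hE v hj)

theorem norm_gramSchmidt_smul_gramSchmidtOrthonormalBasis :
    (‖gramSchmidt 𝕜 v i‖ : 𝕜) • gramSchmidtOrthonormalBasis hE v i = gramSchmidt 𝕜 v i := by
  rcases eq_or_ne (gramSchmidt 𝕜 v i) 0 with h0 | h0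
  · simp [h0]
  have hnorm : (‖gramSchmidt 𝕜 v i‖ : 𝕜) ≠ 0 := by simpa using h0
  rw [gramSchmidtOrthonormalBasis_apply hE (by simpa [gramSchmidtNormed] using h0),
    gramSchmidtNormed, smul_inv_smul₀ hnorm]

theorem norm_inner_gramSchmidtOrthonormalBasis_eq_infDist :
    ‖inner 𝕜 (gramSchmidtOrthonormalBasis hE v i) (v i)‖ =
      infDist (v i) (Submodule.span 𝕜 (v '' Iio i)) := by
  set e := gramSchmidtOrthonormalBasis hE v
  have hinner (w) (hw : w ∈ Submodule.span 𝕜 (v '' Iio i)) :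
      inner 𝕜 (e i) (v i - w) = inner 𝕜 (e i) (v i) := by
    rw [inner_sub_right, inner_gramSchmidtOrthonormalBasis_eq_zero_of_mem_span hE v i hw, sub_zero]
  refine le_antisymm ((le_infDist ⟨0, Submodule.zero_mem _⟩).2 fun w hw => ?_) ?_
  · calc ‖inner 𝕜 (e i) (v i)‖ = ‖inner 𝕜 (e i) (v i - w)‖ := by rw [hinner w hw]
      _ ≤ ‖e i‖ * ‖v i - w‖ := norm_inner_le_norm _ _
      _ = dist (v i) w := by rw [e.norm_eq_one, one_mul, dist_eq_norm]
  · have hmem := sub_gramSchmidt_mem_span (𝕜 := 𝕜) v i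
    calc infDist (v i) (Submodule.span 𝕜 (v '' Iio i))
        ≤ dist (v i) (v i - gramSchmidt 𝕜 v i) := infDist_le_dist_of_mem hmem
      _ = ‖gramSchmidt 𝕜 v i‖ := by rw [dist_eq_norm, sub_sub_cancel]
      _ = ‖inner 𝕜 (e i) (gramSchmidt 𝕜 v i)‖ := by
        rw [← norm_gramSchmidt_smul_gramSchmidtOrthonormalBasis hE v i, inner_smul_right]
        simp [e, norm_smul]
      _ = ‖inner 𝕜 (e i) (v i)‖ := by rw [← hinner _ hmem, sub_sub_cancel]

end GramSchmidt

variable {ι E : Type*} [Fintype ι] [Nonempty ι] [NormedAddCommGroup E] [InnerProductSpace ℝ E]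
  [FiniteDimensional ℝ E] [MeasurableSpace E] [BorelSpace E]

theorem volume_setOf_sum_abs_le_one (ι : Type*) [Fintype ι] [Nonempty ι] :
    volume {x : ι → ℝ | ∑ i, |x i| ≤ 1} =
      ENNReal.ofReal (2 ^ Fintype.card ι / (Fintype.card ι).factorial) := by
  have h := volume_sum_rpow_le ι (le_refl (1 : ℝ)) 1
  simp only [Real.rpow_one, ne_eq, one_ne_zero, not_false_eq_true, div_self, div_one,
    ENNReal.ofReal_one, one_pow, one_mul, Real.Gamma_nat_eq_factorial, one_add_one_eq_two,
    Real.Gamma_two, mul_one] at h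
  exact h

theorem volume_crossPolytope_orthonormalBasis (e : OrthonormalBasis ι ℝ E) :
    volume (crossPolytope e) =
      ENNReal.ofReal (2 ^ Fintype.card ι / (Fintype.card ι).factorial) := by
  have hcoord : (fun x : ι → ℝ => e.repr.symm (WithLp.toLp 2 x)) =
      Fintype.linearCombination ℝ e := by
    ext x
    simp [Fintype.linearCombination_apply, ← e.sum_repr_symm]
  have hpres := hcoord ▸ measurePreserving_repr_symm_toLp e
  have hinj : Function.Injective (Fintype.linearCombination ℝ e) :=
    hcoord ▸ e.repr.symm.injective.comp (WithLp.toLp_injective 2)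
  have hemb := (Fintype.linearCombination ℝ e).continuous_of_finiteDimensional.measurableEmbedding
    hinj
  rw [← hpres.measure_preimage_emb hemb, crossPolytope, preimage_image_eq _ hinj,
    volume_setOf_sum_abs_le_one]

theorem volume_crossPolytope (e : OrthonormalBasis ι ℝ E) [DecidableEq ι] (v : ι → E) :
    volume (crossPolytope v) = ENNReal.ofReal
      (|e.toBasis.det v| * (2 ^ Fintype.card ι / (Fintype.card ι).factorial)) := by
  set M := e.toBasis.constr ℝ v with hM
  have hMe : M ∘ e = v := funext fun i => by
    rw [Function.comp_apply, ← e.coe_toBasis, hM, e.toBasis.constr_basis]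
  have hdet : LinearMap.det M = e.toBasis.det v := by
    have := e.toBasis.det_comp M e.toBasis
    rw [e.toBasis.det_self, mul_one, e.coe_toBasis, hMe] at this
    exact this.symm
  rw [← hMe, ← image_crossPolytope, Measure.addHaar_image_linearMap, hMe, hdet,
    volume_crossPolytope_orthonormalBasis, ENNReal.ofReal_mul (abs_nonneg _)]

theorem volume_crossPolytope_eq_prod_infDist [LinearOrder ι] [LocallyFiniteOrderBot ι]
    (hE : Module.finrank ℝ E = Fintype.card ι) (v : ι → E) :
    volume (crossPolytope v) = ENNReal.ofReal
      ((∏ i, infDist (v i) (Submodule.span ℝ (v '' Iio i))) *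
        (2 ^ Fintype.card ι / (Fintype.card ι).factorial)) := by
  rw [volume_crossPolytope (InnerProductSpace.gramSchmidtOrthonormalBasis hE v),
    InnerProductSpace.gramSchmidtOrthonormalBasis_det, Finset.abs_prod]
  simp only [← Real.norm_eq_abs, norm_inner_gramSchmidtOrthonormalBasis_eq_infDist]

end CrossPolytope

section VolumeComparison

theorem unitBallVol_pos (n : ℕ) : 0 < unitBallVol n :=
  div_pos (by positivity) (Real.Gamma_pos_of_pos (by positivity))

theorem volume_closedBall_eq_unitBallVol {E : Type*} [NormedAddCommGroup E]
    [InnerProductSpace ℝ E] [FiniteDimensional ℝ E] [MeasurableSpace E] [BorelSpace E]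
    [Nontrivial E] (x : E) {r : ℝ} (hr : 0 ≤ r) :
    volume (closedBall x r) =
      ENNReal.ofReal (r ^ Module.finrank ℝ E * unitBallVol (Module.finrank ℝ E)) := by
  have hsqrt (n : ℕ) : √Real.pi ^ n = Real.pi ^ ((n : ℝ) / 2) := by
    rw [Real.sqrt_eq_rpow, ← Real.rpow_mul_natCast Real.pi_pos.le, one_div_mul_eq_div]
  rw [InnerProductSpace.volume_closedBall, ENNReal.ofReal_mul (pow_nonneg hr _),
    ENNReal.ofReal_pow hr, unitBallVol, hsqrt]

theorem infDist_image_le_of_lipschitzWith {X E : Type*} [PseudoMetricSpace X]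
    [PseudoMetricSpace E] {C : NNReal} {φ : E → X} (hφ : LipschitzWith C φ) (x : E) {s : Set E}
    (hs : s.Nonempty) : infDist (φ x) (φ '' s) ≤ C * infDist x s := by
  have := hs.to_subtype
  rw [infDist_eq_iInf (s := s), Real.mul_iInf_of_nonneg C.coe_nonneg]
  exact le_ciInf fun y =>
    (infDist_le_dist_of_mem (mem_image_of_mem φ y.2)).trans (hφ.dist_le_mul x y)

theorem infDist_span_image_le {X E : Type*} [SeminormedAddCommGroup X] [NormedSpace ℝ X]
    [SeminormedAddCommGroup E] [NormedSpace ℝ E] (S : E →L[ℝ] X) (x : E) (s : Set E) :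
    infDist (S x) (Submodule.span ℝ (S '' s)) ≤ ‖S‖ * infDist x (Submodule.span ℝ s) := by
  have hspan : (Submodule.span ℝ (S '' s) : Set X) = S '' (Submodule.span ℝ s : Set E) :=
    congrArg SetLike.coe (Submodule.map_span (S : E →ₗ[ℝ] X) s).symm
  rw [hspan]
  exact infDist_image_le_of_lipschitzWith S.lipschitz x ⟨0, Submodule.zero_mem _⟩

theorem infDist_coe_span_image {X : Type*} [SeminormedAddCommGroup X] [NormedSpace ℝ X]
    {Y : Submodule ℝ X} (x : Y) (s : Set Y) :
    infDist (x : X) (Submodule.span ℝ (Y.subtype '' s)) = infDist x (Submodule.span ℝ s) := by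
  rw [← Submodule.map_span, Submodule.map_coe]
  exact infDist_image isometry_subtype_coe

variable {X E : Type*} [NormedAddCommGroup X] [NormedSpace ℝ X] [NormedAddCommGroup E]
  [InnerProductSpace ℝ E] [FiniteDimensional ℝ E] [MeasurableSpace E] [BorelSpace E]
  {Y : Submodule ℝ X} {ε : ℝ}

theorem volume_image_preimage_closedBall_le (T : Y →L[ℝ] E) (c : X) (ε : ℝ) :
    volume (T '' ((↑) ⁻¹' closedBall c ε)) ≤ volume (closedBall (0 : E) (‖T‖ * ε)) := by
  refine volume_le_volume_closedBall_of_forall_dist_le ?_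
  rintro _ ⟨x, hx, rfl⟩ _ ⟨y, hy, rfl⟩
  calc dist (T x) (T y) ≤ ‖T‖ * dist x y := T.lipschitz.dist_le_mul x y
    _ ≤ ‖T‖ * (2 * ε) := by
      gcongr
      rw [Subtype.dist_eq, two_mul]
      exact dist_triangle_right (x : X) y c |>.trans (add_le_add hx hy)
    _ = 2 * (‖T‖ * ε) := by ring

theorem volume_image_le_of_subset_iUnion_closedBall {κ : Type*} [Fintype κ] (T : Y →L[ℝ] E)
    {c : κ → X} {s : Set Y} (hs : (↑) '' s ⊆ ⋃ k, closedBall (c k) ε) :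
    volume (T '' s) ≤ Fintype.card κ * volume (closedBall (0 : E) (‖T‖ * ε)) := by
  have hcover : T '' s ⊆ ⋃ k, T '' ((↑) ⁻¹' closedBall (c k) ε) := by
    rw [← image_iUnion, ← preimage_iUnion]
    exact image_mono (image_subset_iff.1 hs)
  calc volume (T '' s) ≤ ∑ k, volume (T '' ((↑) ⁻¹' closedBall (c k) ε)) :=
        (measure_mono hcover).trans (measure_iUnion_fintype_le _ _)
    _ ≤ ∑ _k : κ, volume (closedBall (0 : E) (‖T‖ * ε)) :=
        Finset.sum_le_sum fun k _ => volume_image_preimage_closedBall_le T (c k) ε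
    _ = Fintype.card κ * volume (closedBall (0 : E) (‖T‖ * ε)) := by simp

variable {ι κ : Type*} [Fintype ι] [Nonempty ι] [LinearOrder ι] [LocallyFiniteOrderBot ι]
  [Fintype κ] {u : ι → Y} {c : κ → X}

theorem prod_infDist_comp_le_of_crossPolytope_subset (T : Y →L[ℝ] E)
    (hE : Module.finrank ℝ E = Fintype.card ι) (hε : 0 ≤ ε)
    (hc : crossPolytope (Y.subtype ∘ u) ⊆ ⋃ k, closedBall (c k) ε) :
    (∏ i, infDist ((T ∘ u) i) (Submodule.span ℝ (T ∘ u '' Iio i))) *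
        (2 ^ Fintype.card ι / (Fintype.card ι).factorial) ≤
      Fintype.card κ * ((‖T‖ * ε) ^ Fintype.card ι * unitBallVol (Fintype.card ι)) := by
  have : Nontrivial E := Module.nontrivial_of_finrank_pos (R := ℝ) (hE ▸ Fintype.card_pos)
  have himage : T '' crossPolytope u = crossPolytope (T ∘ u) :=
    image_crossPolytope (T : Y →ₗ[ℝ] E) u
  have hcover := volume_image_le_of_subset_iUnion_closedBall T
    ((image_crossPolytope Y.subtype u).trans_subset hc)
  have hV := (unitBallVol_pos (Fintype.card ι)).le
  rwa [himage, volume_crossPolytope_eq_prod_infDist hE, volume_closedBall_eq_unitBallVol (0 : E)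
    (by positivity), hE, ← ENNReal.ofReal_natCast, ← ENNReal.ofReal_mul (Nat.cast_nonneg _),
    ENNReal.ofReal_le_ofReal_iff (by positivity)] at hcover

theorem prod_infDist_le_of_crossPolytope_subset (T : Y ≃L[ℝ] E)
    (hE : Module.finrank ℝ E = Fintype.card ι) (hε : 0 ≤ ε)
    (hc : crossPolytope (Y.subtype ∘ u) ⊆ ⋃ k, closedBall (c k) ε) :
    (∏ i, infDist (u i : X) (Submodule.span ℝ (Y.subtype ∘ u '' Iio i))) *
        (2 ^ Fintype.card ι / (Fintype.card ι).factorial) ≤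
      Fintype.card κ * ((‖(T : Y →L[ℝ] E)‖ * ‖(T.symm : E →L[ℝ] Y)‖ * ε) ^ Fintype.card ι *
        unitBallVol (Fintype.card ι)) := by
  set m := Fintype.card ι
  have hdist (i) : infDist (u i : X) (Submodule.span ℝ (Y.subtype ∘ u '' Iio i)) ≤
      ‖(T.symm : E →L[ℝ] Y)‖ * infDist ((T ∘ u) i) (Submodule.span ℝ (T ∘ u '' Iio i)) := by
    have hinv : T.symm ∘ T ∘ u = u := funext fun j => T.symm_apply_apply (u j)
    have h := infDist_span_image_le (T.symm : E →L[ℝ] Y) (T (u i)) (T ∘ u '' Iio i)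
    rw [ContinuousLinearEquiv.coe_coe, ← image_comp, hinv, T.symm_apply_apply] at h
    rwa [image_comp, infDist_coe_span_image]
  calc _ ≤ (∏ i, ‖(T.symm : E →L[ℝ] Y)‖ *
          infDist ((T ∘ u) i) (Submodule.span ℝ (T ∘ u '' Iio i))) * (2 ^ m / m.factorial) := by
        gcongr with i
        exacts [fun _ _ => infDist_nonneg, hdist i]
    _ = ‖(T.symm : E →L[ℝ] Y)‖ ^ m *
          ((∏ i, infDist ((T ∘ u) i) (Submodule.span ℝ (T ∘ u '' Iio i))) *
            (2 ^ m / m.factorial)) := by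
        rw [Finset.prod_mul_distrib, Finset.prod_const, Finset.card_univ, mul_assoc]
    _ ≤ ‖(T.symm : E →L[ℝ] Y)‖ ^ m *
          (Fintype.card κ * ((‖(T : Y →L[ℝ] E)‖ * ε) ^ m * unitBallVol m)) := by
        gcongr _ * ?_
        exact prod_infDist_comp_le_of_crossPolytope_subset (T : Y →L[ℝ] E) hE hε hc
    _ = _ := by ring

end VolumeComparison

section Entropy

theorem entropyNumber_nonneg {X : Type*} [NormedAddCommGroup X] (n : ℕ) (K : Set X) :
    0 ≤ entropyNumber n K :=
  Real.sInf_nonneg fun _ hε => hε.1.le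

theorem le_mul_entropyNumber {X : Type*} [NormedAddCommGroup X] {n : ℕ} {K : Set X}
    (hK : Bornology.IsBounded K) {a C : ℝ} (hC : 0 ≤ C)
    (h : ∀ ε > 0, ∀ c : Fin (2 ^ n) → X, K ⊆ ⋃ i, closedBall (c i) ε → a ≤ C * ε) :
    a ≤ C * entropyNumber n K := by
  obtain ⟨R, hR, hKR⟩ := hK.subset_closedBall_lt 0 0
  rw [entropyNumber, ← smul_eq_mul, ← Real.sInf_smul_of_nonneg hC]
  refine le_csInf (Set.Nonempty.smul_set ⟨R, hR, fun _ => 0, ?_⟩) ?_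
  · rwa [iUnion_const]
  · rintro _ ⟨ε, ⟨hε, c, hc⟩, rfl⟩
    exact h ε hε c hc

variable {X : Type*} [NormedAddCommGroup X] [NormedSpace ℝ X] {K : Set X}

theorem isBounded_symConvexHull (hK : Bornology.IsBounded K) :
    Bornology.IsBounded (symConvexHull K) := by
  obtain ⟨R, hR, hKR⟩ := hK.exists_pos_norm_le
  refine Bornology.IsBounded.closure (isBounded_iff_forall_norm_le.2 ⟨R, ?_⟩)
  rintro _ ⟨m, c, g, hg, hc, rfl⟩
  calc ‖∑ i, c i • g i‖ ≤ ∑ i, |c i| * R := norm_sum_le_of_le _ fun i _ => by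
        rw [norm_smul, Real.norm_eq_abs]
        exact mul_le_mul_of_nonneg_left (hKR _ (hg i)) (abs_nonneg _)
    _ = (∑ i, |c i|) * R := (Finset.sum_mul ..).symm
    _ ≤ R := mul_le_of_le_one_left hR.le hc

theorem crossPolytope_subset_symConvexHull {m : ℕ} {g : Fin m → X} (hg : ∀ i, g i ∈ K) :
    crossPolytope g ⊆ symConvexHull K := by
  rintro _ ⟨c, hc, rfl⟩
  exact subset_closure ⟨m, c, g, hg, hc, rfl⟩

theorem le_mul_entropyNumber_symConvexHull {E : Type*} [NormedAddCommGroup E]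
    [InnerProductSpace ℝ E] [FiniteDimensional ℝ E] {Y : Submodule ℝ X} (T : Y ≃L[ℝ] E)
    {n : ℕ} (hn : n ≠ 0) (hE : Module.finrank ℝ E = n) (hK : Bornology.IsBounded K)
    {u : Fin n → Y} (hu : ∀ i, (u i : X) ∈ K) {d : ℝ} (hd : 0 ≤ d)
    (hdist : ∀ i, d ≤ infDist (u i : X) (Submodule.span ℝ (Y.subtype ∘ u '' Iio i))) :
    d ≤ ‖(T : Y →L[ℝ] E)‖ * ‖(T.symm : E →L[ℝ] Y)‖ *
      (n.factorial * unitBallVol n) ^ (n : ℝ)⁻¹ * entropyNumber n (symConvexHull K) := by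
  have hV := unitBallVol_pos n
  have : NeZero n := ⟨hn⟩
  borelize E
  refine le_mul_entropyNumber (isBounded_symConvexHull hK) (by positivity) fun ε hε c hc => ?_
  set δ := ‖(T : Y →L[ℝ] E)‖ * ‖(T.symm : E →L[ℝ] Y)‖
  have hvol : d ^ n * (2 ^ n / n.factorial) ≤ 2 ^ n * ((δ * ε) ^ n * unitBallVol n) := by
    calc d ^ n * (2 ^ n / n.factorial)
        ≤ (∏ i, infDist (u i : X) (Submodule.span ℝ (Y.subtype ∘ u '' Iio i))) *
            (2 ^ n / n.factorial) := by
          gcongr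
          simpa using Finset.prod_le_prod (fun _ _ => hd) fun i (_ : i ∈ Finset.univ) => hdist i
      _ ≤ 2 ^ n * ((δ * ε) ^ n * unitBallVol n) := by
          simpa using prod_infDist_le_of_crossPolytope_subset T (by simpa using hE) hε.le
            ((crossPolytope_subset_symConvexHull hu).trans hc)
  refine le_of_pow_le_pow_left₀ hn (by positivity) ?_
  calc d ^ n = d ^ n * (2 ^ n / n.factorial) * (n.factorial / 2 ^ n) := by field_simp
    _ ≤ 2 ^ n * ((δ * ε) ^ n * unitBallVol n) * (n.factorial / 2 ^ n) := by gcongr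
    _ = (δ * ε) ^ n * (n.factorial * unitBallVol n) := by field_simp
    _ = (δ * (n.factorial * unitBallVol n) ^ (n : ℝ)⁻¹ * ε) ^ n := by
      rw [mul_right_comm δ, mul_pow (δ * ε), Real.rpow_inv_natCast_pow (by positivity) hn]

end Entropy

section Greedy

variable {X : Type*} [NormedAddCommGroup X] [NormedSpace ℝ X] {K : Set X} {f : ℕ → X} {γ : ℝ}
  {k n : ℕ}

theorem spanFirst_mono (h : k ≤ n) : spanFirst f k ≤ spanFirst f n :=
  Submodule.span_mono (image_mono fun _ hi => lt_of_lt_of_le hi h)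

theorem mem_spanFirst (h : k < n) : f k ∈ spanFirst f n :=
  Submodule.subset_span (mem_image_of_mem f h)

theorem spanFirst_eq_span_image_Iio (f : ℕ → X) (i : Fin n) :
    spanFirst f i = Submodule.span ℝ ((fun j : Fin n => f j) '' Iio i) := by
  rw [← Function.comp_def f, image_comp, Fin.image_val_Iio]
  rfl

theorem spanFirst_eq_span_range (f : ℕ → X) (n : ℕ) :
    spanFirst f n = Submodule.span ℝ (range fun i : Fin n => f i) := by
  rw [← Function.comp_def f, range_comp, Fin.range_val]
  rfl

theorem linearIndependent_of_forall_notMem_spanFirst (h : ∀ k < n, f k ∉ spanFirst f k) :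
    LinearIndependent ℝ fun i : Fin n => f i := by
  induction n with
  | zero => exact linearIndependent_empty_type
  | succ n ih =>
    refine linearIndependent_finSucc'.2 ⟨ih fun k hk => h k (hk.trans n.lt_succ_self), ?_⟩
    have := h n n.lt_succ_self
    rwa [spanFirst_eq_span_range] at this

theorem greedyError_nonneg (K : Set X) (f : ℕ → X) (n : ℕ) : 0 ≤ greedyError K f n :=
  Real.sSup_nonneg <| forall_mem_image.2 fun _ _ => infDist_nonneg

namespace IsWeakGreedy

theorem mul_greedyError_le_infDist (hf : IsWeakGreedy γ K f) (hγ : 0 < γ) (h : k ≤ n) :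
    γ * greedyError K f n ≤ infDist (f k) (spanFirst f k) := by
  rw [mul_comm, ← le_div_iff₀ hγ]
  refine Real.sSup_le (forall_mem_image.2 fun g hg => ?_) (div_nonneg infDist_nonneg hγ.le)
  calc infDist g (spanFirst f n) ≤ infDist g (spanFirst f k) :=
        infDist_le_infDist_of_subset (spanFirst_mono h) ⟨0, Submodule.zero_mem _⟩
    _ ≤ infDist (f k) (spanFirst f k) / γ := (le_div_iff₀' hγ).2 ((hf k).2 g hg)

theorem finrank_spanFirst (hf : IsWeakGreedy γ K f) (hγ : 0 < γ) (hσ : 0 < greedyError K f n) :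
    Module.finrank ℝ (spanFirst f n) = n := by
  have hli : LinearIndependent ℝ fun i : Fin n => f i :=
    linearIndependent_of_forall_notMem_spanFirst fun k hk hmem =>
      (mul_pos hγ hσ).not_ge <|
        (hf.mul_greedyError_le_infDist hγ hk.le).trans_eq (infDist_zero_of_mem hmem)
  rw [spanFirst_eq_span_range, finrank_span_eq_card hli, Fintype.card_fin]

theorem mul_greedyError_le_entropyNumber {E : Type*} [NormedAddCommGroup E]
    [InnerProductSpace ℝ E] [FiniteDimensional ℝ E] (hf : IsWeakGreedy γ K f) (hγ : 0 < γ)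
    (hK : Bornology.IsBounded K) (hn : n ≠ 0) (hE : Module.finrank ℝ E = n)
    (T : spanFirst f n ≃L[ℝ] E) :
    γ * greedyError K f n ≤
      ‖(T : spanFirst f n →L[ℝ] E)‖ * ‖(T.symm : E →L[ℝ] spanFirst f n)‖ *
        (n.factorial * unitBallVol n) ^ (n : ℝ)⁻¹ * entropyNumber n (symConvexHull K) := by
  refine le_mul_entropyNumber_symConvexHull T hn hE hK
    (u := fun i => ⟨f i, mem_spanFirst i.2⟩) (fun i => (hf i).1)
    (mul_nonneg hγ.le (greedyError_nonneg K f n)) fun i => ?_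
  have h := hf.mul_greedyError_le_infDist hγ i.2.le
  rwa [spanFirst_eq_span_image_Iio] at h

end IsWeakGreedy

end Greedy

theorem weakGreedy_error_le_entropy_banach_general {X : Type*} [NormedAddCommGroup X]
    [NormedSpace ℝ X] {K : Set X} (hK : Bornology.IsBounded K) {γ : ℝ} (hγ : 0 < γ)
    {n : ℕ} (hn : 1 ≤ n) {δ : ℝ} (hδ : 0 ≤ δ)
    (hBM : ∀ Y : Submodule ℝ X, FiniteDimensional ℝ Y → Module.finrank ℝ Y = n →
      ∃ T : Y ≃L[ℝ] EuclideanSpace ℝ (Fin n),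
        ‖(T : Y →L[ℝ] EuclideanSpace ℝ (Fin n))‖ *
          ‖(T.symm : EuclideanSpace ℝ (Fin n) →L[ℝ] Y)‖ ≤ δ)
    {f : ℕ → X} (hf : IsWeakGreedy γ K f) :
    greedyError K f n
      ≤ γ⁻¹ * δ * ((n.factorial : ℝ) * unitBallVol n) ^ ((n : ℝ)⁻¹) *
          entropyNumber n (symConvexHull K) := by
  have hn' : n ≠ 0 := Nat.one_le_iff_ne_zero.1 hn
  have hV := unitBallVol_pos n
  have hε := entropyNumber_nonneg n (symConvexHull K)
  rcases (greedyError_nonneg K f n).eq_or_lt with hσ | hσ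
  · rw [← hσ]
    positivity
  have hrank := hf.finrank_spanFirst hγ hσ
  obtain ⟨T, hT⟩ := hBM (spanFirst f n) (.of_finrank_pos (by omega)) hrank
  rw [mul_assoc, mul_assoc, inv_mul_eq_div, le_div_iff₀' hγ, ← mul_assoc]
  refine (hf.mul_greedyError_le_entropyNumber hγ hK hn' finrank_euclideanSpace_fin T).trans ?_
  gcongr

/-- entropy-based bound for the weak greedy algorithm in a Banach space, in
terms of the Banach–Mazur-type constant `δ`. -/
theorem weakGreedy_error_le_entropy_banach
    {X : Type*} [NormedAddCommGroup X] [NormedSpace ℝ X] [CompleteSpace X]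
    (K : Set X) (hK : IsCompact K) (γ : ℝ) (hγ : γ ∈ Set.Ioc (0 : ℝ) 1)
    (n : ℕ) (hn : 1 ≤ n) (δ : ℝ) (hδ : 1 ≤ δ)
    (hBM : ∀ Y : Submodule ℝ X, FiniteDimensional ℝ Y → Module.finrank ℝ Y = n →
      ∃ T : Y ≃L[ℝ] EuclideanSpace ℝ (Fin n),
        ‖(T : Y →L[ℝ] EuclideanSpace ℝ (Fin n))‖ *
          ‖(T.symm : EuclideanSpace ℝ (Fin n) →L[ℝ] Y)‖ ≤ δ)
    (f : ℕ → X) (hf : IsWeakGreedy γ K f) :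
    greedyError K f n
      ≤ γ⁻¹ * δ * ((n.factorial : ℝ) * unitBallVol n) ^ ((n : ℝ)⁻¹) *
          entropyNumber n (symConvexHull K) :=
  weakGreedy_error_le_entropy_banach_general hK.isBounded hγ.1 hn (zero_le_one.trans hδ) hBM hf
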